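/- arXiv:1710.09670 — 3 statements merged into one kernel-verified Lean document; each statement's English description precedes it below -/
import Mathlib

section
/- Root count via Rouché's theorem: For every complex u with |u| < 1, the function k(w) = w^s − u·A(w) has no zeros on the unit circle |w| = 1, and has exactly s zeros, counted with multiplicity (i.e., the sum over zeros ζ with |ζ| < 1 of the order of vanishing of k at ζ equals s), in the open unit disk |w| < 1. -/
/-!
The proof is the argument principle, carried out by hand for the function `k w = w ^ s - u A(w)`.

On the unit circle `|u A(w)| ≤ |u| < 1 = |w ^ s|` (`norm_pgf_le_one`), so `k` has no zeros there and
`k w / w ^ s` lies in the disk `|z - 1| < 1`, where the principal logarithm is holomorphic.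
Since `k` is not identically zero on the disk of radius `R > 1`, it has finitely many zeros in the
closed unit disk, and can be written as `k w = ∏ ζ ∈ Z, (w - ζ) ^ ord ζ * g w` with `g`
analytic and zero-free on the closed unit disk (`exists_eq_prod_pow_mul`).

The logarithmic derivative of `w ^ (-s) * k w` along the unit circle is then
`∑ ζ ∈ Z, ord ζ / (w - ζ) + g' / g - s / w`, whose integral is `2πi (∑ ord ζ - s)`. As it has the
primitive `log (k w / w ^ s)` on the circle, this integral vanishes
(`sum_eq_of_mem_slitPlane`).
-/

open MeasureTheory ProbabilityTheory Filter

/-- The probability generating function `A(z) = E(z^A) = ∑_j P(A = j) z^j`. -/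
noncomputable def pgf {Ω : Type*} [MeasureSpace Ω] (A : Ω → ℕ) (z : ℂ) : ℂ :=
  ∑' j : ℕ, ((ℙ {ω | A ω = j}).toReal : ℂ) * z ^ j

open Metric

/-- Any zeros at the points of `Z` can be divided out of an analytic function that is nowhere
locally zero. The identity holds on all of `ℂ`, with no condition on `f` outside `U`. -/
lemma exists_eq_prod_pow_mul {U : Set ℂ} {f : ℂ → ℂ} (hf : AnalyticOnNhd ℂ f U)
    (hfin : ∀ z ∈ U, ¬ ∀ᶠ w in nhds z, f w = 0) (Z : Finset ℂ) (hZ : ∀ z ∈ Z, z ∈ U) :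
    ∃ (ord : ℂ → ℕ) (g : ℂ → ℂ), AnalyticOnNhd ℂ g U ∧ (∀ z ∈ Z, g z ≠ 0) ∧
      ∀ w, f w = (∏ ζ ∈ Z, (w - ζ) ^ ord ζ) * g w := by
  classical
  induction Z using Finset.induction_on with
  | empty => exact ⟨fun _ => 0, f, hf, by simp, by simp⟩
  | insert a Z ha ih =>
    obtain ⟨ord, g, hg, hgZ, hfg⟩ := ih fun z hz => hZ z (Finset.mem_insert_of_mem hz)
    have haU : a ∈ U := hZ a (Finset.mem_insert_self _ _)
    have htop : analyticOrderAt g a ≠ ⊤ := by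
      intro h
      refine hfin a haU ((analyticOrderAt_eq_top.1 h).mono fun w hw => ?_)
      rw [hfg, hw, mul_zero]
    obtain ⟨h, hh, hha, hgh⟩ := (hg a haU).analyticOrderAt_ne_top.1 htop
    set n := analyticOrderNatAt g a
    -- The quotient `g w / (w - a) ^ n`, with its removable singularity at `a` filled in.
    set q : ℂ → ℂ := fun w => if w = a then h a else g w / (w - a) ^ n with hq
    have hgq : ∀ w, g w = (w - a) ^ n * q w := by
      intro w
      by_cases hw : w = a
      · subst hw
        simpa [hq] using hgh.self_of_nhds
      · have : (w - a) ^ n ≠ 0 := pow_ne_zero _ (sub_ne_zero.2 hw)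
        simp only [hq, if_neg hw]
        field_simp
    refine ⟨Function.update ord a n, q, ?_, ?_, ?_⟩
    · intro b hb
      by_cases hba : b = a
      · subst hba
        refine hh.congr ?_
        filter_upwards [hgh] with w hw
        by_cases hwb : w = b
        · simp [hq, hwb]
        · have : (w - b) ^ n ≠ 0 := pow_ne_zero _ (sub_ne_zero.2 hwb)
          simp only [hq, if_neg hwb, hw, smul_eq_mul]
          field_simp
      · have hdiv : AnalyticAt ℂ (fun w => g w / (w - a) ^ n) b :=
          (hg b hb).div (by fun_prop) (pow_ne_zero _ (sub_ne_zero.2 hba))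
        refine hdiv.congr ?_
        filter_upwards [isOpen_ne.mem_nhds hba] with w hw
        simp only [hq, if_neg hw]
    · intro z hz
      rcases Finset.mem_insert.1 hz with rfl | hz
      · simpa [hq] using hha
      · intro h0
        exact hgZ z hz (by rw [hgq, h0, mul_zero])
    · intro w
      rw [Finset.prod_insert ha, Function.update_self, hfg w, hgq w]
      have : ∏ ζ ∈ Z, (w - ζ) ^ Function.update ord a n ζ = ∏ ζ ∈ Z, (w - ζ) ^ ord ζ :=
        Finset.prod_congr rfl fun ζ hζ => by
          rw [Function.update_of_ne (ne_of_mem_of_not_mem hζ ha)]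
      rw [this]
      ring

/-- The counting step: the winding number of `w ^ (-s) * ∏ (w - ζ) ^ ord ζ * g w` along the unit
circle is `∑ ord ζ - s`, and it is zero if the values stay in the slit plane. -/
lemma sum_eq_of_mem_slitPlane {R : ℝ} (hR : 1 < R) (s : ℕ) (Z : Finset ℂ) (ord : ℂ → ℕ)
    {f g : ℂ → ℂ} (hg : AnalyticOnNhd ℂ g (ball 0 R)) (hg0 : ∀ w, ‖w‖ ≤ 1 → g w ≠ 0)
    (hZ : ∀ ζ ∈ Z, ‖ζ‖ < 1) (hfg : ∀ w, f w = (∏ ζ ∈ Z, (w - ζ) ^ ord ζ) * g w)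
    (hslit : ∀ w, ‖w‖ = 1 → f w / w ^ s ∈ Complex.slitPlane) :
    ∑ ζ ∈ Z, ord ζ = s := by
  have hgball : ∀ w : ℂ, ‖w‖ ≤ 1 → w ∈ ball (0 : ℂ) R := fun w hw => by
    simpa using hw.trans_lt hR
  have hsub : ∀ w : ℂ, ‖w‖ = 1 → ∀ ζ ∈ Z, w - ζ ≠ 0 := fun w hw ζ hζ h => by
    have := hZ ζ hζ
    rw [← sub_eq_zero.1 h, hw] at this
    exact lt_irrefl _ this
  -- On the circle, `L` is the logarithmic derivative of `w ↦ f w / w ^ s`.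
  let L : ℂ → ℂ := fun w =>
    ((∑ ζ ∈ Z, (ord ζ : ℂ) * (w - ζ)⁻¹) + deriv g w / g w) - (s : ℂ) * (w - 0)⁻¹
  have hderiv : ∀ w ∈ sphere (0 : ℂ) 1,
      HasDerivWithinAt (fun w => Complex.log (f w / w ^ s)) (L w) (sphere 0 1) w := by
    intro w hw
    have hw1 : ‖w‖ = 1 := by simpa using hw
    have hw0 : w ≠ 0 := by
      rintro rfl
      simp at hw1
    have hgd : DifferentiableAt ℂ g w := (hg w (hgball w hw1.le)).differentiableAt
    have hprod : ∀ ζ ∈ Z, (w - ζ) ^ ord ζ ≠ 0 := fun ζ hζ => pow_ne_zero _ (hsub w hw1 ζ hζ)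
    have hprod0 : (∏ ζ ∈ Z, (w - ζ) ^ ord ζ) ≠ 0 := Finset.prod_ne_zero_iff.2 hprod
    have hPd : DifferentiableAt ℂ (fun w => ∏ ζ ∈ Z, (w - ζ) ^ ord ζ) w := by fun_prop
    have hfeq : f = fun w => (∏ ζ ∈ Z, (w - ζ) ^ ord ζ) * g w := funext hfg
    have hfd : DifferentiableAt ℂ f w := by
      rw [hfeq]
      exact hPd.mul hgd
    have hf0 : f w ≠ 0 := by
      rw [hfg]
      exact mul_ne_zero hprod0 (hg0 w hw1.le)
    have hpw : DifferentiableAt ℂ (fun w : ℂ => w ^ s) w := by fun_prop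
    have hpw0 : w ^ s ≠ 0 := pow_ne_zero _ hw0
    have hlog : logDeriv (fun w => f w / w ^ s) w = L w := by
      rw [logDeriv_div (g := fun w => w ^ s) w hf0 hpw0 hfd hpw, hfeq, logDeriv_mul w hprod0 (hg0 w hw1.le) hPd hgd,
        logDeriv_prod hprod (fun ζ _ => by fun_prop), logDeriv_pow]
      have : ∀ ζ ∈ Z, logDeriv (fun w => (w - ζ) ^ ord ζ) w = (ord ζ : ℂ) * (w - ζ)⁻¹ := by
        intro ζ _
        rw [logDeriv_fun_pow (by fun_prop), logDeriv_apply]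
        simp
      rw [Finset.sum_congr rfl this, logDeriv_apply]
      simp [L, div_eq_mul_inv]
    rw [← hlog, logDeriv_apply]
    exact ((hfd.div hpw hpw0).hasDerivAt.clog (hslit w hw1)).hasDerivWithinAt
  have hzero : (∮ w in C(0, 1), L w) = 0 :=
    circleIntegral.integral_eq_zero_of_hasDerivWithinAt zero_le_one hderiv
  have hgq : DifferentiableOn ℂ (fun w => deriv g w / g w) (closedBall 0 1) := fun w hw => by
    have hw1 : ‖w‖ ≤ 1 := by simpa using hw
    exact ((hg.deriv w (hgball w hw1)).div (hg w (hgball w hw1))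
      (hg0 w hw1)).differentiableAt.differentiableWithinAt
  have hgint : (∮ w in C(0, 1), deriv g w / g w) = 0 :=
    Complex.circleIntegral_eq_zero_of_differentiable_on_off_countable zero_le_one
      Set.countable_empty hgq.continuousOn fun z hz =>
        (hgq.mono ball_subset_closedBall).differentiableAt (isOpen_ball.mem_nhds hz.1)
  have hIg : CircleIntegrable (fun w => deriv g w / g w) 0 1 :=
    (hgq.continuousOn.mono sphere_subset_closedBall).circleIntegrable zero_le_one
  have hIinv : ∀ ζ : ℂ, ‖ζ‖ < 1 → ∀ c : ℂ,
      CircleIntegrable (fun w => c * (w - ζ)⁻¹) 0 1 := fun ζ hζ c => by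
    refine ContinuousOn.circleIntegrable zero_le_one
      (continuousOn_const.mul (ContinuousOn.inv₀ (by fun_prop) fun w hw h => ?_))
    have hw1 : ‖w‖ = 1 := by simpa using hw
    rw [sub_eq_zero.1 h] at hw1
    exact hζ.ne hw1
  have hinv : ∀ ζ : ℂ, ‖ζ‖ < 1 → ∀ c : ℂ,
      (∮ w in C(0, 1), c * (w - ζ)⁻¹) = c * (2 * Real.pi * Complex.I) := fun ζ hζ c => by
    rw [circleIntegral.integral_const_mul, circleIntegral.integral_sub_inv_of_mem_ball]
    simpa using hζ
  have hIsum : CircleIntegrable (fun w => ∑ ζ ∈ Z, (ord ζ : ℂ) * (w - ζ)⁻¹) 0 1 :=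
    CircleIntegrable.fun_sum Z fun ζ hζ => hIinv ζ (hZ ζ hζ) _
  have h0 : ‖(0 : ℂ)‖ < 1 := by simp
  simp only [L] at hzero
  have hIadd : CircleIntegrable
      (fun w => (∑ ζ ∈ Z, (ord ζ : ℂ) * (w - ζ)⁻¹) + deriv g w / g w) 0 1 := hIsum.add hIg
  rw [circleIntegral.integral_sub hIadd (hIinv 0 h0 _),
    circleIntegral.integral_add hIsum hIg,
    circleIntegral.integral_fun_sum fun ζ hζ => hIinv ζ (hZ ζ hζ) _, hgint, hinv 0 h0,
    Finset.sum_congr rfl fun ζ hζ => hinv ζ (hZ ζ hζ) _, ← Finset.sum_mul, add_zero,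
    ← sub_mul] at hzero
  have := (mul_eq_zero.1 hzero).resolve_right Complex.two_pi_I_ne_zero
  exact_mod_cast sub_eq_zero.1 this

lemma norm_pgf_le_one {Ω : Type*} [MeasureSpace Ω] [IsProbabilityMeasure (ℙ : Measure Ω)]
    {A : Ω → ℕ} (hmeas : Measurable A) {w : ℂ} (hw : ‖w‖ = 1) : ‖pgf A w‖ ≤ 1 := by
  have htsum : ∑' j : ℕ, ℙ {ω | A ω = j} = 1 := by
    have h := tsum_measure_preimage_singleton (μ := (ℙ : Measure Ω)) Set.countable_univ
      (f := A) fun y _ => hmeas (measurableSet_singleton y)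
    rw [tsum_univ fun j => ℙ (A ⁻¹' {j})] at h
    simpa using! h
  have hone : HasSum (fun j : ℕ => (ℙ {ω | A ω = j}).toReal) 1 := by
    have hne : ∑' j : ℕ, ℙ {ω | A ω = j} ≠ ⊤ := by simp [htsum]
    have h := (ENNReal.summable_toReal hne).hasSum
    rwa [← ENNReal.tsum_toReal_eq fun j => measure_ne_top _ _, htsum, ENNReal.toReal_one] at h
  exact tsum_of_norm_bounded hone fun j => by simp [hw]


/-- **Root count via Rouché's theorem.**  For `|u| < 1` the function `k(w) = w^s - u A(w)` has no
zeros on the unit circle, and exactly `s` zeros counted with multiplicity in the open unit disk: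
there is a finite set `Z` consisting precisely of the zeros of `k` in `|w| < 1`, and an order
function `ord` such that at each `ζ ∈ Z` the function `k` vanishes to order exactly `ord ζ`
(i.e. `k w = (w - ζ)^(ord ζ) g w` near `ζ` with `g` analytic and `g ζ ≠ 0`), with
`∑_{ζ ∈ Z} ord ζ = s`. -/
theorem rouche_root_count
    {Ω : Type*} [MeasureSpace Ω] [IsProbabilityMeasure (ℙ : Measure Ω)]
    (s : ℕ) (hs : 0 < s)
    (A : Ω → ℕ)
    (hmeas : Measurable A)
    (hA0 : 0 < ℙ {ω | A ω = 0}) (hA0' : ℙ {ω | A ω = 0} < 1)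
    (R : ℝ) (hR : 1 < R)
    (hsum : ∀ z : ℂ, ‖z‖ < R →
      Summable fun j : ℕ => ((ℙ {ω | A ω = j}).toReal : ℂ) * z ^ j)
    (hanal : AnalyticOnNhd ℂ (pgf A) (Metric.ball 0 R))
    (u : ℂ) (hu : ‖u‖ < 1) :
    (∀ w : ℂ, ‖w‖ = 1 → w ^ s - u * pgf A w ≠ 0) ∧
    ∃ (Z : Finset ℂ) (ord : ℂ → ℕ),
      (∀ ζ : ℂ, ζ ∈ Z ↔ ‖ζ‖ < 1 ∧ ζ ^ s - u * pgf A ζ = 0) ∧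
      (∀ ζ ∈ Z, ∃ g : ℂ → ℂ, AnalyticAt ℂ g ζ ∧ g ζ ≠ 0 ∧
        ∀ᶠ w in nhds ζ, w ^ s - u * pgf A w = (w - ζ) ^ (ord ζ) * g w) ∧
      ∑ ζ ∈ Z, ord ζ = s := by
  classical
  have hcircle : ∀ w : ℂ, ‖w‖ = 1 → ‖u * pgf A w‖ < 1 := fun w hw => by
    rw [norm_mul]
    exact (mul_le_of_le_one_right (norm_nonneg _) (norm_pgf_le_one hmeas hw)).trans_lt hu
  have hne : ∀ w : ℂ, ‖w‖ = 1 → w ^ s - u * pgf A w ≠ 0 := fun w hw h => by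
    have := hcircle w hw
    rw [← sub_eq_zero.1 h, norm_pow, hw, one_pow] at this
    exact lt_irrefl _ this
  refine ⟨hne, ?_⟩
  have hk : AnalyticOnNhd ℂ (fun w => w ^ s - u * pgf A w) (ball 0 R) := fun w hw =>
    (by fun_prop : AnalyticAt ℂ (fun w : ℂ => w ^ s) w).sub (analyticAt_const.mul (hanal w hw))
  have hpre : IsPreconnected (ball (0 : ℂ) R) := (convex_ball 0 R).isPreconnected
  have h1 : (1 : ℂ) ∈ ball (0 : ℂ) R := by simpa using hR
  have hfreq : ∀ z ∈ ball (0 : ℂ) R,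
      ¬ ∃ᶠ w in nhdsWithin z {z}ᶜ, w ^ s - u * pgf A w = 0 := fun z hz h =>
    hne 1 (by simp) (hk.eqOn_zero_of_preconnected_of_frequently_eq_zero hpre hz h h1)
  have hfinite : {w : ℂ | ‖w‖ < 1 ∧ w ^ s - u * pgf A w = 0}.Finite := by
    by_contra hinf
    obtain ⟨z, hz, hacc⟩ := Set.Infinite.exists_accPt_of_subset_isCompact hinf
      (isCompact_closedBall (0 : ℂ) 1) fun w hw => by simpa using hw.1.le
    refine hfreq z (closedBall_subset_ball hR hz) ?_
    rw [frequently_nhdsWithin_iff]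
    exact (accPt_iff_frequently.1 hacc).mono fun w hw => ⟨hw.2.2, hw.1⟩
  have hmem : ∀ ζ : ℂ, ζ ∈ hfinite.toFinset ↔ ‖ζ‖ < 1 ∧ ζ ^ s - u * pgf A ζ = 0 := by simp
  obtain ⟨ord, g, hg, hgZ, hfg⟩ := exists_eq_prod_pow_mul hk
    (fun z hz h => hfreq z hz (h.filter_mono nhdsWithin_le_nhds).frequently)
    hfinite.toFinset fun z hz => by simpa using ((hmem z).1 hz).1.trans hR
  have hZball : ∀ ζ ∈ hfinite.toFinset, ζ ∈ ball (0 : ℂ) R := fun ζ hζ => by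
    simpa using ((hmem ζ).1 hζ).1.trans hR
  refine ⟨hfinite.toFinset, ord, hmem, fun ζ hζ => ?_, ?_⟩
  · refine ⟨fun w => (∏ ξ ∈ hfinite.toFinset.erase ζ, (w - ξ) ^ ord ξ) * g w, ?_, ?_, ?_⟩
    · exact (by fun_prop : AnalyticAt ℂ
        (fun w => ∏ ξ ∈ hfinite.toFinset.erase ζ, (w - ξ) ^ ord ξ) ζ).mul (hg ζ (hZball ζ hζ))
    · refine mul_ne_zero (Finset.prod_ne_zero_iff.2 fun ξ hξ => ?_) (hgZ ζ hζ)
      exact pow_ne_zero _ (sub_ne_zero.2 (Finset.ne_of_mem_erase hξ).symm)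
    · refine Eventually.of_forall fun w => ?_
      rw [hfg w, ← Finset.mul_prod_erase _ _ hζ, mul_assoc]
  · refine sum_eq_of_mem_slitPlane hR s _ ord hg (fun w hw hgw => ?_)
      (fun ζ hζ => ((hmem ζ).1 hζ).1) hfg fun w hw => ?_
    · have hkw : w ^ s - u * pgf A w = 0 := by rw [hfg w, hgw, mul_zero]
      rcases hw.lt_or_eq with hw | hw
      · exact hgZ w ((hmem w).2 ⟨hw, hkw⟩) hgw
      · exact hne w hw hkw
    · -- The quotient is `1 - u A(w) / w ^ s`, of positive real part.
      have hws : w ^ s ≠ 0 := pow_ne_zero _ (norm_ne_zero_iff.1 (by simp [hw]))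
      have hnorm : ‖u * pgf A w / w ^ s‖ < 1 := by
        rw [norm_div, norm_pow, hw, one_pow, div_one]
        exact hcircle w hw
      rw [sub_div, div_self hws]
      refine Complex.mem_slitPlane_of_norm_lt_one (z := -(u * pgf A w / w ^ s)) ?_
      rwa [norm_neg]
end

section
/- Existence of a zero-free annulus: For every v ∈ (0,1) there exist real numbers a, b with 0 < a < 1 < b < R such that for every complex u with |u| ≤ v and every complex w with a ≤ |w| ≤ b one has |u·A(w)| < |w|^s; consequently w^s − u·A(w) ≠ 0 on the annulus a ≤ |w| ≤ b, and every zero ζ of w^s − u·A(w) with |ζ| ≤ 1 satisfies |ζ| < a. -/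
/-!
Since the coefficients of `A(z)` are nonnegative, `|A(w)| ≤ |A(|w|)|` (`norm_pgf_le`), so it is
enough to work on the positive real axis. There `r ↦ r ^ s - v |A(r)|` is continuous near `r = 1`
and equals `1 - v > 0` at `r = 1` because `A(1) = 1` (`pgf_one`). Hence it is positive on an
interval `[a, b]` around `1` inside `(0, R)`, which gives the strict inequality on the annulus;
the two claims about zeros follow at once.
-/

open MeasureTheory ProbabilityTheory

theorem pgf_one {Ω : Type*} [MeasureSpace Ω] [IsProbabilityMeasure (ℙ : Measure Ω)]
    (A : Ω → ℕ) (hmeas : Measurable A) : pgf A 1 = 1 := by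
  have h : ∑' j : ℕ, (ℙ : Measure Ω) {ω | A ω = j} = 1 := by
    have hd : Pairwise (Function.onFun Disjoint fun j : ℕ => {ω | A ω = j}) := by
      intro i j hij
      rw [Function.onFun, Set.disjoint_left]
      intro ω hi hj
      exact hij (hi.symm.trans hj)
    rw [← measure_iUnion hd fun j => hmeas (measurableSet_singleton j)]
    have hu : (⋃ j : ℕ, {ω | A ω = j}) = Set.univ := by
      ext ω
      simp
    rw [hu, measure_univ]
  have h' : ∑' j : ℕ, ((ℙ : Measure Ω) {ω | A ω = j}).toReal = 1 := by
    rw [← ENNReal.tsum_toReal_eq fun j => measure_ne_top _ _, h, ENNReal.toReal_one]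
  simp only [pgf, one_pow, mul_one]
  rw [← Complex.ofReal_tsum, h', Complex.ofReal_one]

theorem norm_pgf_le {Ω : Type*} [MeasureSpace Ω] (A : Ω → ℕ) (w : ℂ)
    (hw : Summable fun j : ℕ => ((ℙ {ω | A ω = j}).toReal : ℂ) * w ^ j) :
    ‖pgf A w‖ ≤ ‖pgf A (‖w‖ : ℂ)‖ := by
  have hterm : ∀ j : ℕ, ‖((ℙ {ω | A ω = j}).toReal : ℂ) * w ^ j‖
      = (ℙ {ω | A ω = j}).toReal * ‖w‖ ^ j := by
    intro j
    rw [norm_mul, norm_pow, Complex.norm_of_nonneg ENNReal.toReal_nonneg]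
  have hval : pgf A (‖w‖ : ℂ)
      = ((∑' j : ℕ, ‖((ℙ {ω | A ω = j}).toReal : ℂ) * w ^ j‖ : ℝ) : ℂ) := by
    rw [pgf, Complex.ofReal_tsum]
    refine tsum_congr fun j => ?_
    rw [hterm]
    push_cast
    rfl
  rw [hval, Complex.norm_of_nonneg (tsum_nonneg fun j => norm_nonneg _)]
  exact norm_tsum_le_tsum_norm hw.norm

/-- **Existence of a zero-free annulus.**  For every `v ∈ (0,1)` there are `0 < a < 1 < b < R`
such that for all `|u| ≤ v` and all `w` with `a ≤ |w| ≤ b` one has `|u A(w)| < |w|^s`; hence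
`w^s - u A(w) ≠ 0` on the annulus, and every zero `ζ` of `w^s - u A(w)` with `|ζ| ≤ 1`
satisfies `|ζ| < a`. -/
theorem zero_free_annulus
    {Ω : Type*} [MeasureSpace Ω] [IsProbabilityMeasure (ℙ : Measure Ω)]
    (s : ℕ) (hs : 0 < s)
    (A : Ω → ℕ)
    (hmeas : Measurable A)
    (hA0 : 0 < ℙ {ω | A ω = 0}) (hA0' : ℙ {ω | A ω = 0} < 1)
    (R : ℝ) (hR : 1 < R)
    (hsum : ∀ z : ℂ, ‖z‖ < R →
      Summable fun j : ℕ => ((ℙ {ω | A ω = j}).toReal : ℂ) * z ^ j)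
    (hanal : AnalyticOnNhd ℂ (pgf A) (Metric.ball 0 R))
    (v : ℝ) (hv : v ∈ Set.Ioo (0 : ℝ) 1) :
    ∃ a b : ℝ, 0 < a ∧ a < 1 ∧ 1 < b ∧ b < R ∧
      (∀ u : ℂ, ‖u‖ ≤ v → ∀ w : ℂ, a ≤ ‖w‖ → ‖w‖ ≤ b →
        ‖u * pgf A w‖ < ‖w‖ ^ s) ∧
      (∀ u : ℂ, ‖u‖ ≤ v → ∀ w : ℂ, a ≤ ‖w‖ → ‖w‖ ≤ b →
        w ^ s - u * pgf A w ≠ 0) ∧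
      (∀ u : ℂ, ‖u‖ ≤ v → ∀ ζ : ℂ, ‖ζ‖ ≤ 1 →
        ζ ^ s - u * pgf A ζ = 0 → ‖ζ‖ < a) := by
  obtain ⟨hv0, hv1⟩ := hv
  have hcA : ContinuousAt (pgf A) ((1 : ℝ) : ℂ) :=
    (hanal _ (by simpa using hR)).continuousAt
  have hc : ContinuousAt (fun r : ℝ => r ^ s - v * ‖pgf A (r : ℂ)‖) 1 := by
    have h1 : ContinuousAt (fun r : ℝ => pgf A (r : ℂ)) 1 :=
      ContinuousAt.comp (f := fun r : ℝ => (r : ℂ)) hcA Complex.continuous_ofReal.continuousAt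
    exact (continuousAt_id.pow s).sub (continuousAt_const.mul h1.norm)
  have hpos : ∀ᶠ r : ℝ in nhds 1, 0 < r ^ s - v * ‖pgf A (r : ℂ)‖ := by
    refine hc.eventually (lt_mem_nhds ?_)
    simp [pgf_one A hmeas, hv1]
  obtain ⟨ε, hε, hball⟩ := Metric.eventually_nhds_iff.mp hpos
  -- `δ` is small enough for positivity on `[1 - δ, 1 + δ]`, and for `0 < 1 - δ`, `1 + δ < R`.
  obtain ⟨δ, hδ0, hδ⟩ := exists_between (lt_min hε (lt_min one_pos (sub_pos.mpr hR)))
  obtain ⟨hδε, hδ'⟩ := lt_min_iff.mp hδ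
  obtain ⟨hδ1, hδR⟩ := lt_min_iff.mp hδ'
  have key : ∀ u : ℂ, ‖u‖ ≤ v → ∀ w : ℂ, 1 - δ ≤ ‖w‖ → ‖w‖ ≤ 1 + δ →
      ‖u * pgf A w‖ < ‖w‖ ^ s := by
    intro u hu w hw1 hw2
    have hr : 0 < ‖w‖ ^ s - v * ‖pgf A (‖w‖ : ℂ)‖ := by
      apply hball
      rw [Real.dist_eq, abs_lt]
      constructor <;> linarith
    have hle : ‖u * pgf A w‖ ≤ v * ‖pgf A (‖w‖ : ℂ)‖ := by
      rw [norm_mul]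
      exact mul_le_mul hu (norm_pgf_le A w (hsum w (by linarith))) (norm_nonneg _) hv0.le
    linarith
  have hne : ∀ u : ℂ, ‖u‖ ≤ v → ∀ w : ℂ, 1 - δ ≤ ‖w‖ → ‖w‖ ≤ 1 + δ →
      w ^ s - u * pgf A w ≠ 0 := by
    intro u hu w hw1 hw2 h0
    have h := key u hu w hw1 hw2
    rw [← sub_eq_zero.mp h0, norm_pow] at h
    exact lt_irrefl _ h
  refine ⟨1 - δ, 1 + δ, by linarith, by linarith, by linarith, by linarith, key, hne, ?_⟩
  intro u hu ζ hζ h0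
  by_contra! hlt
  exact hne u hu ζ hlt (by linarith) h0
end

section
/- Vanishing contour integral: For all real numbers z, b with 0 < z < 1 < b, ∮_{|w|=b} (1/w) · Log((z − w)/(1 − w)) dw = 0, where Log is the principal branch of the complex logarithm and the integral is over the positively oriented circle of radius b centered at 0. -/
/-!
Since `dw / w = i dθ` on the circle, the integral is invariant under the reflection `θ ↦ 2π - θ`,
which on `|w| = b` is `w ↦ b² / w`. This turns the integrand's logarithm into
`Log ((b² - z w) / (b² - w))`, which is holomorphic on the closed disc `|w| ≤ b`
(`reflected_mem_slitPlane`), so by the mean value property the integral is `2πi` times its value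
at `0`, namely `2πi Log 1 = 0`. The reflection plays the role of letting the radius tend to
infinity.
-/

/-- If `(b² - z u) / (b² - u) = -t` with `t ≥ 0`, then `b² (1 + t) = u (z + t)`, which is impossible
for `|u| ≤ b` because `z < 1 < b`. -/
lemma reflected_mem_slitPlane (z b : ℝ) (hz0 : 0 < z) (hz1 : z < 1) (hb : 1 < b) (u : ℂ)
    (hu : ‖u‖ ≤ b) :
    (b : ℂ) ^ 2 - u ≠ 0 ∧ ((b : ℂ) ^ 2 - z * u) / ((b : ℂ) ^ 2 - u) ∈ Complex.slitPlane := by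
  have hne : (b : ℂ) ^ 2 - u ≠ 0 := by
    intro h
    have h2 : ‖u‖ = b ^ 2 := by
      rw [← sub_eq_zero.mp h, norm_pow, Complex.norm_real, Real.norm_of_nonneg (by linarith)]
    nlinarith
  refine ⟨hne, ?_⟩
  rw [Complex.mem_slitPlane_iff_not_le_zero]
  intro h
  obtain ⟨hre, him⟩ := Complex.le_def.mp h
  set q := ((b : ℂ) ^ 2 - z * u) / ((b : ℂ) ^ 2 - u) with hq
  have hqr : q = ((-(-q.re) : ℝ) : ℂ) := by
    apply Complex.ext <;> simp_all
  simp only [Complex.zero_re] at hre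
  obtain ⟨t, ht⟩ : ∃ t, t = -q.re := ⟨_, rfl⟩
  have ht0 : 0 ≤ t := by linarith
  rw [← ht] at hqr
  have h1 : (b : ℂ) ^ 2 - z * u = ((-t : ℝ) : ℂ) * ((b : ℂ) ^ 2 - u) := by
    rw [← hqr, hq, div_mul_cancel₀ _ hne]
  have h2 : ((b ^ 2 * (1 + t) : ℝ) : ℂ) = u * ((z + t : ℝ) : ℂ) := by
    push_cast at h1 ⊢
    linear_combination h1
  have h3 := congrArg norm h2
  rw [norm_mul, Complex.norm_real, Complex.norm_real, Real.norm_of_nonneg (by positivity),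
    Real.norm_of_nonneg (by positivity)] at h3
  have h4 : ‖u‖ * (z + t) ≤ b * (z + t) := by gcongr
  have h5 : b * (z + t) < b * (b * (1 + t)) := by
    apply mul_lt_mul_of_pos_left _ (by linarith)
    nlinarith
  nlinarith

lemma circleMap_reflect (b : ℝ) (hb : b ≠ 0) (θ : ℝ) :
    circleMap 0 b (2 * Real.pi - θ) = (b : ℂ) ^ 2 / circleMap 0 b θ := by
  have hb' : (b : ℂ) ≠ 0 := by exact_mod_cast hb
  rw [eq_div_iff (circleMap_ne_center hb)]
  simp only [circleMap, zero_add]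
  have : Complex.exp (((2 * Real.pi - θ : ℝ) : ℂ) * Complex.I) * Complex.exp (θ * Complex.I)
      = 1 := by
    rw [← Complex.exp_add, ← Complex.exp_two_pi_mul_I]
    congr 1
    push_cast
    ring
  linear_combination (b : ℂ) ^ 2 * this

lemma circleIntegral_inv_mul_reflect (b : ℝ) (hb : b ≠ 0) (f : ℂ → ℂ) :
    (∮ w in C(0, b), w⁻¹ * f w) = ∮ w in C(0, b), w⁻¹ * f ((b : ℂ) ^ 2 / w) := by
  have key : ∀ g : ℂ → ℂ, (∮ w in C(0, b), w⁻¹ * g w)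
      = ∫ θ in (0 : ℝ)..2 * Real.pi, Complex.I * g (circleMap 0 b θ) := by
    intro g
    rw [circleIntegral]
    congr 1
    ext θ
    have h0 : circleMap 0 b θ ≠ 0 := circleMap_ne_center hb
    simp only [deriv_circleMap, smul_eq_mul]
    field_simp
  rw [key, key fun w => f ((b : ℂ) ^ 2 / w)]
  have h := intervalIntegral.integral_comp_sub_left (a := 0) (b := 2 * Real.pi)
    (fun θ => Complex.I * f (circleMap 0 b θ)) (2 * Real.pi)
  simp only [sub_self, sub_zero, circleMap_reflect b hb] at h
  exact h.symm

/-- **Vanishing contour integral.**  For reals `0 < z < 1 < b`,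
`∮_{|w|=b} (1/w) · Log ((z - w)/(1 - w)) dw = 0`, where `Log` is the principal complex
logarithm and the contour is the positively oriented circle of radius `b` about `0`. -/
theorem vanishing_contour_integral (z b : ℝ) (hz0 : 0 < z) (hz1 : z < 1) (hb : 1 < b) :
    (∮ w in C(0, b), w⁻¹ * Complex.log (((z : ℂ) - w) / (1 - w))) = 0 := by
  have hb0 : 0 < b := by linarith
  rw [circleIntegral_inv_mul_reflect b hb0.ne'
    (fun w => Complex.log (((z : ℂ) - w) / (1 - w)))]
  set g : ℂ → ℂ := fun u => Complex.log (((b : ℂ) ^ 2 - z * u) / ((b : ℂ) ^ 2 - u)) with hg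
  have hdiff : DifferentiableOn ℂ g (Metric.closedBall 0 b) := by
    intro u hu
    obtain ⟨hne, hs⟩ := reflected_mem_slitPlane z b hz0 hz1 hb u (by simpa using hu)
    apply DifferentiableAt.differentiableWithinAt
    refine DifferentiableAt.clog (DifferentiableAt.div ?_ ?_ hne) hs <;> fun_prop
  have hmean := hdiff.circleIntegral_sub_inv_smul (w := 0) (by simpa using hb0)
  have hg0 : g 0 = 0 := by
    have : (b : ℂ) ≠ 0 := by exact_mod_cast hb0.ne'
    simp [hg, this]
  rw [hg0, smul_zero] at hmean
  refine (circleIntegral.integral_congr hb0.le ?_).trans hmean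
  intro w hw
  have hw0 : w ≠ 0 := by
    rintro rfl
    simp [hb0.ne] at hw
  have hwb : ‖w‖ = b := by simpa using hw
  have hne := (reflected_mem_slitPlane z b hz0 hz1 hb w hwb.le).1
  have hne' : w - (b : ℂ) ^ 2 ≠ 0 := by
    rw [← neg_sub]
    exact neg_ne_zero.mpr hne
  have hfrac : ((z : ℂ) - (b : ℂ) ^ 2 / w) / (1 - (b : ℂ) ^ 2 / w)
      = ((b : ℂ) ^ 2 - z * w) / ((b : ℂ) ^ 2 - w) := by
    have h1 : (1 - (b : ℂ) ^ 2 / w) = (w - (b : ℂ) ^ 2) / w := by field_simp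
    rw [h1, div_eq_div_iff (div_ne_zero hne' hw0) hne]
    field_simp
    ring
  simp only [hg, sub_zero, smul_eq_mul, hfrac]
end
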